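/- (Lemma 2) Let σ_N > 0, σ_S > 0 and set ρ = σ_S²/σ_N². The conditional differential entropy h_{Y|X} := −∫₀^∞ p_X(x) ( ∫₀^∞ p_{Y|X}(y|x) · log p_{Y|X}(y|x) dy ) dx is given in closed form by h_{Y|X} = log √(σ_S²) + 2(1 + ρ) − (1 + ρ⁻¹) · log(1 + ρ) − ρ⁻¹ · √(1 + ρ⁻¹) · F(ρ) − ψ(1)/2 − log 2, where F(ρ) = ∫₀^∞ ξ · K₁(√(1 + ρ⁻¹) · ξ) · I₁(ξ) · log I₁(ξ) dξ. -/

import Mathlib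

open Real MeasureTheory Set Filter

/-- Modified Bessel function of the first kind of order one,
`I₁(z) = ∑_{k=0}^∞ (z/2)^(2k+1) / (k! (k+1)!)`. -/
noncomputable def besselI1 (z : ℝ) : ℝ :=
  ∑' k : ℕ, (z / 2) ^ (2 * k + 1) / ((Nat.factorial k : ℝ) * (Nat.factorial (k + 1) : ℝ))

/-- Modified Bessel function of the second kind of order one,
`K₁(z) = ∫₀^∞ exp (−z cosh t) cosh t dt`. -/
noncomputable def besselK1 (z : ℝ) : ℝ :=
  ∫ t in Ioi (0 : ℝ), Real.exp (-z * Real.cosh t) * Real.cosh t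

/-- Digamma function `ψ(x) = d/dx log Γ(x)`. -/
noncomputable def digamma (x : ℝ) : ℝ :=
  deriv (fun y : ℝ => Real.log (Real.Gamma y)) x

/-- Conditional output density of the noncentral chi channel with four degrees of freedom. -/
noncomputable def condDensity (σN x y : ℝ) : ℝ :=
  (2 / σN ^ 2) * (y ^ 2 / x) * Real.exp (-(x ^ 2 + y ^ 2) / σN ^ 2) *
    besselI1 (2 * x * y / σN ^ 2)

/-- Rayleigh input density with mean-square `σS²`. -/
noncomputable def rayleighDensity (σS x : ℝ) : ℝ :=
  (2 * x / σS ^ 2) * Real.exp (-x ^ 2 / σS ^ 2)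

/-- `F(ρ) = ∫₀^∞ ξ K₁(√(1+ρ⁻¹) ξ) I₁(ξ) log I₁(ξ) dξ`. -/
noncomputable def Fint (ρ : ℝ) : ℝ :=
  ∫ ξ in Ioi (0 : ℝ),
    ξ * besselK1 (Real.sqrt (1 + ρ⁻¹) * ξ) * besselI1 ξ * Real.log (besselI1 ξ)

/-- Closed-form mutual information of Theorem 1. -/
noncomputable def Ixy (ρ : ℝ) : ℝ :=
  Real.log (ρ * Real.sqrt (1 + ρ⁻¹)) + ρ⁻¹ * Real.log (Real.sqrt (1 + ρ)) - ρ +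
    ρ⁻¹ * Real.sqrt (1 + ρ⁻¹) * Fint ρ + digamma ρ⁻¹ - digamma 1 - 1

/-!
Under the joint law of input `X` and output `Y` the entropy is `-E log p(Y|X)`, and `log p(Y|X)`
splits into a constant, `log X`, `log Y`, `X² + Y²` and `log I₁(2XY/σN²)`. The first terms only see
the marginals: `X²` is exponential, and integrating the Bessel series against a Gaussian shows that
the law of `Y` is an affine combination of two Rayleigh laws, so that everything reduces to
`E U = 1` and `E log U = ψ(1)` for a standard exponential `U`. For the last term, the law of
`2XY/σN²` is obtained by integrating the joint density along the hyperbolas `xy = const`, where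
it is proportional to `y exp (-β/y² - γy²)`; in the variable `y²` this is an integral
representation of `K₁`.
-/

open scoped ENNReal

section Lebesgue

variable {α β : Type*} [MeasurableSpace α] [MeasurableSpace β] {μ : Measure α} {ν : Measure β}

theorem fst_withDensity_prod [SFinite μ] [SFinite ν] {f : α × β → ℝ≥0∞} (hf : Measurable f) :
    ((μ.prod ν).withDensity f).fst = μ.withDensity fun x => ∫⁻ y, f (x, y) ∂ν := by
  ext s hs
  rw [Measure.fst_apply hs, withDensity_apply _ (measurable_fst hs), withDensity_apply _ hs,
    ← prod_univ, ← Measure.prod_restrict, Measure.restrict_univ, lintegral_prod _ hf.aemeasurable]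

theorem snd_withDensity_prod [SFinite μ] [SFinite ν] {f : α × β → ℝ≥0∞} (hf : Measurable f) :
    ((μ.prod ν).withDensity f).snd = ν.withDensity fun y => ∫⁻ x, f (x, y) ∂μ := by
  ext s hs
  rw [Measure.snd_apply hs, withDensity_apply _ (measurable_snd hs), withDensity_apply _ hs,
    ← univ_prod, ← Measure.prod_restrict, Measure.restrict_univ,
    lintegral_prod_symm _ hf.aemeasurable]

theorem integral_withDensity_ofReal {f : α → ℝ} (hf : Measurable f) (hf0 : 0 ≤ᵐ[μ] f)
    (g : α → ℝ) :
    ∫ x, g x ∂μ.withDensity (fun x => ENNReal.ofReal (f x)) = ∫ x, f x * g x ∂μ := by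
  rw [integral_withDensity_eq_integral_toReal_smul hf.ennreal_ofReal (by simp)]
  refine integral_congr_ae ?_
  filter_upwards [hf0] with x hx
  rw [ENNReal.toReal_ofReal hx, smul_eq_mul]

theorem integrable_withDensity_ofReal_iff {f : α → ℝ} (hf : Measurable f) (hf0 : 0 ≤ᵐ[μ] f)
    {g : α → ℝ} :
    Integrable g (μ.withDensity fun x => ENNReal.ofReal (f x)) ↔
      Integrable (fun x => f x * g x) μ := by
  rw [integrable_withDensity_iff_integrable_smul' hf.ennreal_ofReal (by simp)]
  refine integrable_congr ?_
  filter_upwards [hf0] with x hx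
  rw [ENNReal.toReal_ofReal hx, smul_eq_mul]

theorem ae_Ioi_of_forall_pos {p : ℝ → Prop} (h : ∀ x > 0, p x) :
    ∀ᵐ x ∂volume.restrict (Ioi (0 : ℝ)), p x :=
  (ae_restrict_mem measurableSet_Ioi).mono h

theorem lintegral_comp_mul_left_Ioi (f : ℝ → ℝ≥0∞) {c : ℝ} (hc : 0 < c) :
    ENNReal.ofReal c * ∫⁻ x in Ioi 0, f (c * x) = ∫⁻ x in Ioi 0, f x := by
  have himage : (fun x => c * x) '' Ioi 0 = Ioi 0 := by
    rw [image_mul_left_Ioi hc, mul_zero]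
  conv_rhs => rw [← himage]
  rw [lintegral_image_eq_lintegral_abs_deriv_mul measurableSet_Ioi
    (fun x _ => ((hasDerivAt_id' x).const_mul c).hasDerivWithinAt)
    (mul_right_injective₀ hc.ne').injOn]
  simp only [mul_one, abs_of_pos hc]
  rw [lintegral_const_mul' _ _ ENNReal.ofReal_ne_top]

theorem integral_Ioi_two_mul_comp_sq (g : ℝ → ℝ) :
    ∫ y in Ioi (0 : ℝ), 2 * y * g (y ^ 2) = ∫ u in Ioi (0 : ℝ), g u := by
  rw [← integral_comp_rpow_Ioi_of_pos (g := g) (p := 2) two_pos]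
  norm_num

theorem integrableOn_Ioi_two_mul_comp_sq_iff (g : ℝ → ℝ) :
    IntegrableOn (fun y => 2 * y * g (y ^ 2)) (Ioi 0) ↔ IntegrableOn g (Ioi 0) := by
  rw [← integrableOn_Ioi_comp_rpow_iff g (p := 2) two_ne_zero]
  norm_num

theorem integral_exp_mul_comp_exp (g : ℝ → ℝ) :
    ∫ t, exp t * g (exp t) = ∫ u in Ioi 0, g u := by
  rw [← range_exp, ← image_univ, integral_image_eq_integral_abs_deriv_smul .univ
    (fun t _ => (hasDerivAt_exp t).hasDerivWithinAt) exp_injective.injOn]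
  simp only [abs_exp, smul_eq_mul, setIntegral_univ]

theorem integrable_exp_mul_comp_exp_iff (g : ℝ → ℝ) :
    Integrable (fun t => exp t * g (exp t)) ↔ IntegrableOn g (Ioi 0) := by
  rw [← range_exp, ← image_univ, integrableOn_image_iff_integrableOn_abs_deriv_smul .univ
    (fun t _ => (hasDerivAt_exp t).hasDerivWithinAt) exp_injective.injOn]
  simp only [abs_exp, smul_eq_mul, integrableOn_univ]

end Lebesgue

section Gamma

theorem abs_log_le_rpow_add_rpow_neg_div {x ε : ℝ} (hx : 0 < x) (hε : 0 < ε) :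
    |log x| ≤ (x ^ ε + x ^ (-ε)) / ε := by
  have hlog : log x ≤ x ^ ε / ε := log_le_rpow_div hx.le hε
  have hlog_inv : -log x ≤ x ^ (-ε) / ε := by
    simpa only [log_inv, inv_rpow hx.le, rpow_neg hx.le] using log_le_rpow_div (inv_pos.2 hx).le hε
  have hpos : 0 ≤ x ^ ε / ε := by positivity
  have hpos_neg : 0 ≤ x ^ (-ε) / ε := by positivity
  rw [add_div, abs_le]
  constructor <;> linarith

theorem integrableOn_rpow_mul_exp_neg_mul_log {s : ℝ} (hs : 0 < s) :
    IntegrableOn (fun u => u ^ (s - 1) * exp (-u) * log u) (Ioi 0) := by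
  have hdom := ((GammaIntegral_convergent (s := s + s / 2) (by positivity)).add
    (GammaIntegral_convergent (half_pos hs))).div_const (s / 2)
  refine Integrable.mono' hdom (by fun_prop) (ae_Ioi_of_forall_pos fun u hu => ?_)
  have hadd : u ^ (s + s / 2 - 1) = u ^ (s - 1) * u ^ (s / 2) := by
    rw [← rpow_add hu]; ring_nf
  have hsub : u ^ (s / 2 - 1) = u ^ (s - 1) * u ^ (-(s / 2)) := by
    rw [← rpow_add hu]; ring_nf
  rw [norm_mul, norm_of_nonneg (by positivity), norm_eq_abs]
  calc u ^ (s - 1) * exp (-u) * |log u|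
      ≤ u ^ (s - 1) * exp (-u) * ((u ^ (s / 2) + u ^ (-(s / 2))) / (s / 2)) := by
        gcongr; exact abs_log_le_rpow_add_rpow_neg_div hu (half_pos hs)
    _ = _ := by simp only [Pi.add_apply, hadd, hsub]; ring

theorem hasDerivAt_Gamma_integral {s : ℝ} (hs : 0 < s) :
    HasDerivAt Gamma (∫ u in Ioi (0 : ℝ), u ^ (s - 1) * exp (-u) * log u) s := by
  have hGamma : Complex.GammaIntegral =ᶠ[nhds (s : ℂ)] Complex.Gamma := by
    have hre : ∀ᶠ z : ℂ in nhds (s : ℂ), 0 < z.re :=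
      Complex.continuous_re.continuousAt.eventually (lt_mem_nhds (by simpa))
    filter_upwards [hre] with z hz using (Complex.Gamma_eq_integral hz).symm
  have h := ((Complex.hasDerivAt_GammaIntegral (s := s) (by simpa)).congr_of_eventuallyEq
    hGamma.symm).real_of_complex
  simp only [Complex.Gamma_ofReal, Complex.ofReal_re] at h
  convert h
  rw [← Complex.ofReal_re (∫ u in Ioi (0 : ℝ), _), ← integral_complex_ofReal]
  congr 1
  refine setIntegral_congr_fun measurableSet_Ioi fun u hu => ?_
  simp only [Complex.ofReal_mul, Complex.ofReal_cpow (le_of_lt hu)]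
  push_cast
  ring

theorem integral_rpow_mul_exp_neg_mul_log {s : ℝ} (hs : 0 < s) :
    ∫ u in Ioi (0 : ℝ), u ^ (s - 1) * exp (-u) * log u = Gamma s * digamma s := by
  have h := hasDerivAt_Gamma_integral hs
  rw [digamma, (h.log (Gamma_pos_of_pos hs).ne').deriv,
    mul_div_cancel₀ _ (Gamma_pos_of_pos hs).ne']

theorem lintegral_odd_pow_mul_gaussian (n : ℕ) {b : ℝ} (hb : 0 < b) :
    ∫⁻ y in Ioi (0 : ℝ), ENNReal.ofReal (y ^ (2 * n + 1) * exp (-b * y ^ 2)) =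
      ENNReal.ofReal (n.factorial / (2 * b ^ (n + 1))) := by
  have hq : (-1 : ℝ) < (2 * n + 1 : ℕ) :=
    neg_one_lt_zero.trans_le (Nat.cast_nonneg _)
  have hint := integrableOn_rpow_mul_exp_neg_mul_sq hb hq
  have h := integral_rpow_mul_exp_neg_mul_rpow two_pos hq hb
  simp only [rpow_natCast, rpow_two] at h hint
  rw [← ofReal_integral_eq_lintegral_ofReal hint
    (ae_Ioi_of_forall_pos fun y (hy : 0 < y) => by simp only [Pi.zero_apply]; positivity), h]
  have hexp : (((2 * n + 1 : ℕ) : ℝ) + 1) / 2 = (n + 1 : ℕ) := by push_cast; ring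
  rw [neg_div, hexp, rpow_neg hb.le, rpow_natCast, Nat.cast_succ, Gamma_nat_eq_factorial]
  congr 1
  field_simp

end Gamma

section BesselI

theorem besselI1_term_eq_mul (w : ℝ) (k : ℕ) :
    w ^ (2 * k + 1) / (k.factorial * (k + 1).factorial) =
      w ^ k / k.factorial * (w ^ (k + 1) / (k + 1).factorial) := by
  rw [div_mul_div_comm, ← pow_add]
  ring_nf

theorem hasSum_besselI1 (z : ℝ) :
    HasSum (fun k : ℕ => (z / 2) ^ (2 * k + 1) / (k.factorial * (k + 1).factorial))
      (besselI1 z) := by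
  refine Summable.hasSum ?_
  simp only [besselI1_term_eq_mul]
  refine .of_norm_bounded
    ((summable_pow_div_factorial |z / 2|).mul_right (exp |z / 2|)) fun k => ?_
  generalize z / 2 = w
  simp only [norm_mul, norm_div, norm_pow, norm_eq_abs, Nat.abs_cast]
  gcongr
  exact pow_div_factorial_le_exp _ (abs_nonneg _) _

theorem half_le_besselI1 {z : ℝ} (hz : 0 ≤ z) : z / 2 ≤ besselI1 z := by
  simpa using le_hasSum (hasSum_besselI1 z) 0 fun k _ => by positivity

theorem besselI1_nonneg {z : ℝ} (hz : 0 ≤ z) : 0 ≤ besselI1 z :=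
  (div_nonneg hz two_pos.le).trans (half_le_besselI1 hz)

theorem besselI1_pos {z : ℝ} (hz : 0 < z) : 0 < besselI1 z :=
  (half_pos hz).trans_le (half_le_besselI1 hz.le)

theorem besselI1_le_exp {z : ℝ} (hz : 0 ≤ z) : besselI1 z ≤ exp z := by
  have hexp : HasSum (fun k : ℕ => (z / 2) ^ k / k.factorial * exp (z / 2)) (exp z) := by
    have h := (NormedSpace.expSeries_div_hasSum_exp (𝔸 := ℝ) (z / 2)).mul_right (exp (z / 2))
    rwa [← exp_eq_exp_ℝ, ← exp_add, add_halves] at h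
  refine hasSum_le (fun k => ?_) (hasSum_besselI1 z) hexp
  rw [besselI1_term_eq_mul]
  gcongr
  exact pow_div_factorial_le_exp _ (by positivity) _

theorem abs_log_besselI1_le {z : ℝ} (hz : 0 < z) :
    |log (besselI1 z)| ≤ |log (z / 2)| + z := by
  have hlower := log_le_log (half_pos hz) (half_le_besselI1 hz.le)
  have hupper := (log_le_iff_le_exp (besselI1_pos hz)).2 (besselI1_le_exp hz.le)
  exact abs_le.2 ⟨by linarith [neg_abs_le (log (z / 2))], by linarith [abs_nonneg (log (z / 2))]⟩

@[fun_prop]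
theorem measurable_besselI1 : Measurable besselI1 := by
  unfold besselI1
  fun_prop

theorem lintegral_pow_mul_gaussian_mul_besselI1 (m : ℕ) {b c : ℝ} (hb : 0 < b) (hc : 0 ≤ c) :
    ∫⁻ y in Ioi (0 : ℝ), ENNReal.ofReal (y ^ (2 * m) * exp (-b * y ^ 2) * besselI1 (c * y)) =
      ∑' k : ℕ, ENNReal.ofReal ((c / 2) ^ (2 * k + 1) / (k.factorial * (k + 1).factorial) *
        ((k + m).factorial / (2 * b ^ (k + m + 1)))) := by
  have hterm (k : ℕ) (y : ℝ) : y ^ (2 * m) * exp (-b * y ^ 2) *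
      ((c * y / 2) ^ (2 * k + 1) / (k.factorial * (k + 1).factorial)) =
        (c / 2) ^ (2 * k + 1) / (k.factorial * (k + 1).factorial) *
          (y ^ (2 * (k + m) + 1) * exp (-b * y ^ 2)) := by
    rw [mul_div_right_comm, mul_pow]
    ring
  calc ∫⁻ y in Ioi (0 : ℝ), ENNReal.ofReal (y ^ (2 * m) * exp (-b * y ^ 2) * besselI1 (c * y))
      = ∫⁻ y in Ioi (0 : ℝ), ∑' k : ℕ, ENNReal.ofReal (y ^ (2 * m) * exp (-b * y ^ 2) *
          ((c * y / 2) ^ (2 * k + 1) / (k.factorial * (k + 1).factorial))) := by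
        refine lintegral_congr_ae (ae_Ioi_of_forall_pos fun y hy => ?_)
        simp only
        rw [besselI1, ← tsum_mul_left, ENNReal.ofReal_tsum_of_nonneg (fun k => by positivity)]
        exact (hasSum_besselI1 _).summable.mul_left _
    _ = ∑' k : ℕ, ENNReal.ofReal ((c / 2) ^ (2 * k + 1) / (k.factorial * (k + 1).factorial)) *
          ∫⁻ y in Ioi (0 : ℝ), ENNReal.ofReal (y ^ (2 * (k + m) + 1) * exp (-b * y ^ 2)) := by
        simp only [hterm]
        rw [lintegral_tsum fun k => by fun_prop]
        refine tsum_congr fun k => ?_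
        rw [← lintegral_const_mul' _ _ ENNReal.ofReal_ne_top]
        refine lintegral_congr fun y => ?_
        rw [ENNReal.ofReal_mul (by positivity)]
    _ = _ := by
        refine tsum_congr fun k => ?_
        rw [lintegral_odd_pow_mul_gaussian _ hb, ENNReal.ofReal_mul (by positivity)]

theorem lintegral_sq_mul_gaussian_mul_besselI1 {b c : ℝ} (hb : 0 < b) (hc : 0 ≤ c) :
    ∫⁻ y in Ioi (0 : ℝ), ENNReal.ofReal (y ^ 2 * exp (-b * y ^ 2) * besselI1 (c * y)) =
      ENNReal.ofReal (c / (4 * b ^ 2) * exp (c ^ 2 / (4 * b))) := by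
  have h := lintegral_pow_mul_gaussian_mul_besselI1 1 hb hc
  have hsum := (NormedSpace.expSeries_div_hasSum_exp (𝔸 := ℝ) (c ^ 2 / (4 * b))).mul_left
    (c / (4 * b ^ 2))
  rw [← exp_eq_exp_ℝ] at hsum
  rw [← hsum.tsum_eq, ENNReal.ofReal_tsum_of_nonneg (fun k => by positivity) hsum.summable]
  refine h.trans (tsum_congr fun k => ?_)
  congr 1
  simp only [show (4 : ℝ) = 2 ^ 2 by norm_num, div_pow, mul_pow, ← pow_mul]
  field_simp
  ring

theorem lintegral_gaussian_mul_besselI1 {b c : ℝ} (hb : 0 < b) (hc : 0 < c) :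
    ∫⁻ x in Ioi (0 : ℝ), ENNReal.ofReal (exp (-b * x ^ 2) * besselI1 (c * x)) =
      ENNReal.ofReal ((exp (c ^ 2 / (4 * b)) - 1) / c) := by
  have h := lintegral_pow_mul_gaussian_mul_besselI1 0 hb hc.le
  simp only [mul_zero, pow_zero, one_mul, add_zero] at h
  have hsum := ((hasSum_nat_add_iff' 1).2
    (NormedSpace.expSeries_div_hasSum_exp (𝔸 := ℝ) (c ^ 2 / (4 * b)))).div_const c
  rw [← exp_eq_exp_ℝ, Finset.sum_range_one, pow_zero, Nat.factorial_zero, Nat.cast_one,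
    div_one] at hsum
  rw [← hsum.tsum_eq, ENNReal.ofReal_tsum_of_nonneg (fun k => by positivity) hsum.summable]
  refine h.trans (tsum_congr fun k => ?_)
  congr 1
  simp only [show (4 : ℝ) = 2 ^ 2 by norm_num, div_pow, mul_pow, ← pow_mul]
  field_simp
  ring

end BesselI

section BesselK

theorem integrableOn_exp_neg_mul_add_inv {z : ℝ} (hz : 0 < z) :
    IntegrableOn (fun u => exp (-z * ((u + u⁻¹) / 2))) (Ioi 0) := by
  refine (exp_neg_integrableOn_Ioi 0 (half_pos hz)).mono' (by fun_prop)
    (ae_Ioi_of_forall_pos fun u hu => ?_)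
  have hinv : 0 < z * u⁻¹ := by positivity
  rw [norm_of_nonneg (exp_pos _).le, exp_le_exp]
  linarith

theorem two_mul_besselK1_eq_integral {z : ℝ} (hz : 0 < z) :
    2 * besselK1 z = ∫ u in Ioi (0 : ℝ), exp (-z * ((u + u⁻¹) / 2)) := by
  have hint : Integrable fun t => exp t * exp (-z * cosh t) := by
    simpa only [← exp_neg, ← cosh_eq] using
      (integrable_exp_mul_comp_exp_iff _).2 (integrableOn_exp_neg_mul_add_inv hz)
  have hint_neg : Integrable fun t => exp (-t) * exp (-z * cosh t) := by
    simpa only [cosh_neg] using hint.comp_neg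
  have hneg : ∫ t, exp (-t) * exp (-z * cosh t) = ∫ t, exp t * exp (-z * cosh t) := by
    simpa only [cosh_neg] using integral_neg_eq_self (fun t => exp t * exp (-z * cosh t)) volume
  calc 2 * besselK1 z
      = ∫ t, exp (-z * cosh t) * cosh t := by
        rw [besselK1]
        simpa only [cosh_abs] using
          (integral_comp_abs (f := fun t => exp (-z * cosh t) * cosh t)).symm
    _ = ∫ t, (exp t * exp (-z * cosh t) + exp (-t) * exp (-z * cosh t)) / 2 := by
        congr 1 with t
        rw [cosh_eq t]
        ring
    _ = ∫ t, exp t * exp (-z * cosh t) := by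
        rw [integral_div, integral_add hint hint_neg, hneg, add_self_div_two]
    _ = _ := by
        simpa only [← exp_neg, ← cosh_eq] using
          integral_exp_mul_comp_exp fun u => exp (-z * ((u + u⁻¹) / 2))

@[fun_prop]
theorem measurable_besselK1 : Measurable besselK1 := by
  unfold besselK1
  refine (StronglyMeasurable.integral_prod_right
    (f := fun z t => exp (-z * cosh t) * cosh t) ?_).measurable
  exact Measurable.stronglyMeasurable (by fun_prop)

theorem besselK1_nonneg (z : ℝ) : 0 ≤ besselK1 z :=
  integral_nonneg fun t => mul_nonneg (exp_pos _).le (cosh_pos t).le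

theorem integral_exp_neg_div_sub_mul {β γ : ℝ} (hβ : 0 < β) (hγ : 0 < γ) :
    ∫ u in Ioi (0 : ℝ), exp (-β / u - γ * u) = 2 * √(β / γ) * besselK1 (2 * √(β * γ)) := by
  have hr : 0 < √(β / γ) := by positivity
  have hmul : γ * √(β / γ) = √(β * γ) := by
    rw [show β * γ = γ ^ 2 * (β / γ) by field_simp, sqrt_mul (by positivity), sqrt_sq hγ.le]
  have hdiv : β / √(β / γ) = √(β * γ) := by
    rw [← hmul, div_eq_iff hr.ne', mul_assoc, mul_self_sqrt (by positivity)]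
    field_simp
  have hscale := integral_comp_mul_left_Ioi' (fun u => exp (-β / u - γ * u)) 0 hr
  rw [mul_zero] at hscale
  rw [← hscale, mul_right_comm, two_mul_besselK1_eq_integral (by positivity), smul_eq_mul,
    mul_comm]
  congr 2 with u
  rw [← mul_assoc γ, hmul, neg_div, ← div_div, hdiv]
  ring_nf

theorem lintegral_two_mul_exp_neg_div_sq_sub_mul_sq {β γ : ℝ} (hβ : 0 < β) (hγ : 0 < γ) :
    ∫⁻ y in Ioi (0 : ℝ), ENNReal.ofReal (2 * y * exp (-β / y ^ 2 - γ * y ^ 2)) =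
      ENNReal.ofReal (2 * √(β / γ) * besselK1 (2 * √(β * γ))) := by
  have hint : IntegrableOn (fun u => exp (-β / u - γ * u)) (Ioi 0) := by
    refine (exp_neg_integrableOn_Ioi 0 hγ).mono' (by fun_prop)
      (ae_Ioi_of_forall_pos fun u hu => ?_)
    have hdiv : 0 < β / u := by positivity
    rw [norm_of_nonneg (exp_pos _).le, exp_le_exp, neg_div]
    linarith
  rw [← integral_exp_neg_div_sub_mul hβ hγ,
    ← integral_Ioi_two_mul_comp_sq fun u => exp (-β / u - γ * u)]
  refine (ofReal_integral_eq_lintegral_ofReal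
    ((integrableOn_Ioi_two_mul_comp_sq_iff _).2 hint) ?_).symm
  exact ae_Ioi_of_forall_pos fun y hy => by simp only [Pi.zero_apply]; positivity

end BesselK

open ProbabilityTheory

section GammaLaw

theorem gammaMeasure_eq_withDensity_Ioi (a r : ℝ) :
    gammaMeasure a r = (volume.restrict (Ioi 0)).withDensity (gammaPDF a r) := by
  rw [← withDensity_indicator measurableSet_Ioi, gammaMeasure]
  refine withDensity_congr_ae ?_
  filter_upwards [Measure.ae_ne volume (0 : ℝ)] with u hu
  rcases hu.lt_or_gt with hneg | hpos
  · rw [indicator_of_notMem (notMem_Ioi.2 hneg.le), gammaPDF_of_neg hneg]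
  · rw [indicator_of_mem (mem_Ioi.2 hpos)]

variable {a : ℝ}

theorem gammaPDFReal_one_rate_of_pos {u : ℝ} (hu : 0 < u) :
    gammaPDFReal a 1 u = (Gamma a)⁻¹ * (u ^ (a - 1) * exp (-u)) := by
  rw [gammaPDFReal, if_pos hu.le, one_rpow, one_mul, one_div, mul_assoc]

theorem integral_gammaMeasure_one_rate (ha : 0 < a) (g : ℝ → ℝ) :
    ∫ u, g u ∂gammaMeasure a 1 =
      (Gamma a)⁻¹ * ∫ u in Ioi (0 : ℝ), u ^ (a - 1) * exp (-u) * g u := by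
  rw [gammaMeasure_eq_withDensity_Ioi]
  refine (integral_withDensity_ofReal (measurable_gammaPDFReal a 1)
    (.of_forall (gammaPDFReal_nonneg ha one_pos)) g).trans ?_
  rw [← integral_const_mul]
  refine setIntegral_congr_fun measurableSet_Ioi fun u hu => ?_
  simp only [gammaPDFReal_one_rate_of_pos hu, mul_assoc]

theorem integrable_gammaMeasure_one_rate (ha : 0 < a) {g : ℝ → ℝ}
    (hg : IntegrableOn (fun u => u ^ (a - 1) * exp (-u) * g u) (Ioi 0)) :
    Integrable g (gammaMeasure a 1) := by
  rw [gammaMeasure_eq_withDensity_Ioi]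
  refine (integrable_withDensity_ofReal_iff (measurable_gammaPDFReal a 1)
    (.of_forall (gammaPDFReal_nonneg ha one_pos))).2 ?_
  refine (integrableOn_congr_fun (fun u hu => ?_) measurableSet_Ioi).2 (hg.const_mul (Gamma a)⁻¹)
  simp only [gammaPDFReal_one_rate_of_pos hu, mul_assoc]

theorem integrable_log_gammaMeasure_one_rate (ha : 0 < a) :
    Integrable log (gammaMeasure a 1) :=
  integrable_gammaMeasure_one_rate ha (integrableOn_rpow_mul_exp_neg_mul_log ha)

theorem integral_log_gammaMeasure_one_rate (ha : 0 < a) :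
    ∫ u, log u ∂gammaMeasure a 1 = digamma a := by
  rw [integral_gammaMeasure_one_rate ha, integral_rpow_mul_exp_neg_mul_log ha,
    inv_mul_cancel_left₀ (Gamma_pos_of_pos ha).ne']

theorem rpow_sub_one_mul_exp_neg_mul_self {u : ℝ} (hu : 0 < u) :
    u ^ (a - 1) * exp (-u) * u = exp (-u) * u ^ (a + 1 - 1) := by
  rw [add_sub_cancel_right, mul_right_comm, rpow_sub_one hu.ne', div_mul_cancel₀ _ hu.ne',
    mul_comm]

theorem integrable_id_gammaMeasure_one_rate (ha : 0 < a) :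
    Integrable (fun u => u) (gammaMeasure a 1) :=
  integrable_gammaMeasure_one_rate ha ((GammaIntegral_convergent (add_pos ha one_pos)).congr_fun
    (fun _ hu => (rpow_sub_one_mul_exp_neg_mul_self hu).symm) measurableSet_Ioi)

theorem integral_id_gammaMeasure_one_rate (ha : 0 < a) : ∫ u, u ∂gammaMeasure a 1 = a := by
  rw [integral_gammaMeasure_one_rate ha, setIntegral_congr_fun measurableSet_Ioi
    fun _ hu => rpow_sub_one_mul_exp_neg_mul_self hu, ← Gamma_eq_integral (add_pos ha one_pos),
    Gamma_add_one ha.ne', mul_comm a, inv_mul_cancel_left₀ (Gamma_pos_of_pos ha).ne']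

theorem expMeasure_one_eq_withDensity :
    expMeasure 1 = (volume.restrict (Ioi 0)).withDensity fun u => ENNReal.ofReal (exp (-u)) := by
  rw [expMeasure, gammaMeasure_eq_withDensity_Ioi]
  refine withDensity_congr_ae (ae_Ioi_of_forall_pos fun u hu => ?_)
  rw [gammaPDF, gammaPDFReal_one_rate_of_pos hu, Gamma_one, inv_one, one_mul, sub_self, rpow_zero,
    one_mul]

end GammaLaw

section Rayleigh

/-- The Rayleigh law with mean square `σ²`, the law of the channel input. -/
noncomputable def rayleighMeasure (σ : ℝ) : Measure ℝ :=
  (volume.restrict (Ioi 0)).withDensity fun x => ENNReal.ofReal (rayleighDensity σ x)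

@[fun_prop]
theorem measurable_rayleighDensity (σ : ℝ) : Measurable (rayleighDensity σ) := by
  unfold rayleighDensity
  fun_prop

theorem rayleighDensity_nonneg (σ : ℝ) {x : ℝ} (hx : 0 ≤ x) : 0 ≤ rayleighDensity σ x := by
  unfold rayleighDensity
  positivity

variable {σ : ℝ}

theorem map_mul_sqrt_expMeasure_one (hσ : 0 < σ) :
    (expMeasure 1).map (fun u => σ * √u) = rayleighMeasure σ := by
  have himage : (fun x => x ^ 2 / σ ^ 2) '' Ioi 0 = Ioi 0 := by
    refine Subset.antisymm (image_subset_iff.2 fun x (hx : 0 < x) => ?_) fun u (hu : 0 < u) =>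
      ⟨σ * √u, mul_pos hσ (sqrt_pos.2 hu), ?_⟩
    · exact div_pos (pow_pos hx 2) (pow_pos hσ 2)
    · simp only [mul_pow, sq_sqrt hu.le]
      exact mul_div_cancel_left₀ u (pow_pos hσ 2).ne'
  have hroot {x : ℝ} (hx : 0 < x) : σ * √(x ^ 2 / σ ^ 2) = x := by
    rw [← div_pow, sqrt_sq (by positivity), mul_div_cancel₀ _ hσ.ne']
  have hinj : InjOn (fun x => x ^ 2 / σ ^ 2) (Ioi 0) :=
    LeftInvOn.injOn (f₁' := fun u => σ * √u) fun _ hx => hroot hx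
  refine Measure.ext_of_lintegral _ fun f hf => ?_
  rw [lintegral_map hf (by fun_prop), expMeasure_one_eq_withDensity, rayleighMeasure,
    lintegral_withDensity_eq_lintegral_mul _ (by fun_prop) (by fun_prop),
    lintegral_withDensity_eq_lintegral_mul _ (by fun_prop) hf]
  conv_lhs => rw [← himage]
  rw [lintegral_image_eq_lintegral_abs_deriv_mul measurableSet_Ioi
    (fun x _ => ((hasDerivAt_pow 2 x).div_const _).hasDerivWithinAt) hinj]
  refine setLIntegral_congr_fun measurableSet_Ioi fun x (hx : 0 < x) => ?_
  simp only [Pi.mul_apply, hroot hx]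
  rw [← mul_assoc, ← ENNReal.ofReal_mul (abs_nonneg _), rayleighDensity, abs_of_pos (by positivity),
    Nat.add_one_sub_one, pow_one, Nat.cast_ofNat, neg_div]

theorem isProbabilityMeasure_rayleighMeasure (hσ : 0 < σ) :
    IsProbabilityMeasure (rayleighMeasure σ) := by
  have := isProbabilityMeasure_expMeasure one_pos
  rw [← map_mul_sqrt_expMeasure_one hσ]
  exact Measure.isProbabilityMeasure_map (by fun_prop)

theorem ae_expMeasure_one_pos : ∀ᵐ u ∂expMeasure 1, 0 < u := by
  rw [expMeasure_one_eq_withDensity]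
  exact (withDensity_absolutelyContinuous _ _).ae_le (ae_restrict_mem measurableSet_Ioi)

theorem sq_mul_sqrt_ae_eq_expMeasure_one (σ : ℝ) :
    (fun u => (σ * √u) ^ 2) =ᵐ[expMeasure 1] fun u => σ ^ 2 * u := by
  filter_upwards [ae_expMeasure_one_pos] with u hu
  rw [mul_pow, sq_sqrt hu.le]

theorem log_mul_sqrt_ae_eq_expMeasure_one (hσ : 0 < σ) :
    (fun u => log (σ * √u)) =ᵐ[expMeasure 1] fun u => log σ + log u / 2 := by
  filter_upwards [ae_expMeasure_one_pos] with u hu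
  rw [log_mul hσ.ne' (sqrt_pos.2 hu).ne', log_sqrt hu.le]

theorem integrable_sq_rayleighMeasure (hσ : 0 < σ) :
    Integrable (fun x => x ^ 2) (rayleighMeasure σ) := by
  rw [← map_mul_sqrt_expMeasure_one hσ, integrable_map_measure (by fun_prop) (by fun_prop)]
  exact (integrable_congr (sq_mul_sqrt_ae_eq_expMeasure_one σ)).2
    ((integrable_id_gammaMeasure_one_rate one_pos).const_mul _)

theorem integral_sq_rayleighMeasure (hσ : 0 < σ) : ∫ x, x ^ 2 ∂rayleighMeasure σ = σ ^ 2 := by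
  rw [← map_mul_sqrt_expMeasure_one hσ, integral_map (by fun_prop) (by fun_prop),
    integral_congr_ae (sq_mul_sqrt_ae_eq_expMeasure_one σ), integral_const_mul, expMeasure,
    integral_id_gammaMeasure_one_rate one_pos, mul_one]

theorem integrable_log_rayleighMeasure (hσ : 0 < σ) : Integrable log (rayleighMeasure σ) := by
  have := isProbabilityMeasure_expMeasure one_pos
  rw [← map_mul_sqrt_expMeasure_one hσ, integrable_map_measure (by fun_prop) (by fun_prop)]
  exact (integrable_congr (log_mul_sqrt_ae_eq_expMeasure_one hσ)).2
    ((integrable_const _).add ((integrable_log_gammaMeasure_one_rate one_pos).div_const 2))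

theorem integral_log_rayleighMeasure (hσ : 0 < σ) :
    ∫ x, log x ∂rayleighMeasure σ = log σ + digamma 1 / 2 := by
  have := isProbabilityMeasure_expMeasure one_pos
  have hlog : Integrable log (expMeasure 1) := integrable_log_gammaMeasure_one_rate one_pos
  rw [← map_mul_sqrt_expMeasure_one hσ, integral_map (by fun_prop) (by fun_prop),
    integral_congr_ae (log_mul_sqrt_ae_eq_expMeasure_one hσ),
    integral_add (integrable_const _) (hlog.div_const 2), integral_div, integral_const,
    probReal_univ, one_smul, expMeasure, integral_log_gammaMeasure_one_rate one_pos]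

end Rayleigh

section Channel

@[fun_prop]
theorem measurable_condDensity (σN : ℝ) : Measurable fun p : ℝ × ℝ => condDensity σN p.1 p.2 := by
  unfold condDensity
  fun_prop

variable {σN σS : ℝ}

theorem condDensity_nonneg (σN : ℝ) {x y : ℝ} (hx : 0 ≤ x) (hy : 0 ≤ y) :
    0 ≤ condDensity σN x y := by
  have := besselI1_nonneg (z := 2 * x * y / σN ^ 2) (by positivity)
  unfold condDensity
  positivity

theorem lintegral_condDensity (hσN : 0 < σN) {x : ℝ} (hx : 0 < x) :
    ∫⁻ y in Ioi (0 : ℝ), ENNReal.ofReal (condDensity σN x y) = 1 := by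
  have hfactor (y : ℝ) : condDensity σN x y = 2 / (σN ^ 2 * x) * exp (-x ^ 2 / σN ^ 2) *
      (y ^ 2 * exp (-(σN ^ 2)⁻¹ * y ^ 2) * besselI1 (2 * x / σN ^ 2 * y)) := by
    rw [condDensity, show -(x ^ 2 + y ^ 2) / σN ^ 2 = -x ^ 2 / σN ^ 2 + -(σN ^ 2)⁻¹ * y ^ 2 by ring,
      exp_add, mul_div_right_comm (2 * x)]
    field_simp
  have hexp : (2 * x / σN ^ 2) ^ 2 / (4 * (σN ^ 2)⁻¹) = -(-x ^ 2 / σN ^ 2) := by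
    field_simp
    norm_num
  simp only [hfactor]
  simp only [ENNReal.ofReal_mul (by positivity : 0 ≤ 2 / (σN ^ 2 * x) * exp (-x ^ 2 / σN ^ 2))]
  rw [lintegral_const_mul' _ _ ENNReal.ofReal_ne_top,
    lintegral_sq_mul_gaussian_mul_besselI1 (by positivity) (by positivity), hexp, exp_neg,
    ← ENNReal.ofReal_mul (by positivity), ENNReal.ofReal_eq_one]
  field_simp
  norm_num

theorem log_condDensity (hσN : 0 < σN) {x y : ℝ} (hx : 0 < x) (hy : 0 < y) :
    log (condDensity σN x y) = log 2 - log (σN ^ 2) + 2 * log y - log x -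
      (x ^ 2 + y ^ 2) / σN ^ 2 + log (besselI1 (2 * x * y / σN ^ 2)) := by
  have h := besselI1_pos (z := 2 * x * y / σN ^ 2) (by positivity)
  rw [condDensity, log_mul (by positivity) h.ne', log_mul (by positivity) (exp_pos _).ne',
    log_exp, log_mul (by positivity) (by positivity), log_div two_ne_zero (by positivity),
    log_div (by positivity) hx.ne', log_pow y, Nat.cast_ofNat]
  ring

end Channel

section JointLaw

/-- The joint density of the Rayleigh input `p.1` and the channel output `p.2`. -/
noncomputable def jointDensity (σN σS : ℝ) (p : ℝ × ℝ) : ℝ :=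
  rayleighDensity σS p.1 * condDensity σN p.1 p.2

/-- The joint law of input and output, carried by the open quadrant. -/
noncomputable def jointMeasure (σN σS : ℝ) : Measure (ℝ × ℝ) :=
  ((volume.restrict (Ioi 0)).prod (volume.restrict (Ioi 0))).withDensity fun p =>
    ENNReal.ofReal (jointDensity σN σS p)

@[fun_prop]
theorem measurable_jointDensity (σN σS : ℝ) : Measurable (jointDensity σN σS) := by
  unfold jointDensity
  fun_prop

theorem ae_prod_restrict_Ioi_pos :
    ∀ᵐ p : ℝ × ℝ ∂(volume.restrict (Ioi (0 : ℝ))).prod (volume.restrict (Ioi (0 : ℝ))),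
      0 < p.1 ∧ 0 < p.2 := by
  rw [Measure.prod_restrict]
  exact (ae_restrict_mem (measurableSet_Ioi.prod measurableSet_Ioi)).mono fun p hp => hp

theorem ae_jointMeasure_pos (σN σS : ℝ) : ∀ᵐ p ∂jointMeasure σN σS, 0 < p.1 ∧ 0 < p.2 :=
  (withDensity_absolutelyContinuous _ _).ae_le ae_prod_restrict_Ioi_pos

theorem jointDensity_nonneg_ae (σN σS : ℝ) :
    0 ≤ᵐ[(volume.restrict (Ioi (0 : ℝ))).prod (volume.restrict (Ioi (0 : ℝ)))]
      jointDensity σN σS :=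
  ae_prod_restrict_Ioi_pos.mono fun _ hp =>
    mul_nonneg (rayleighDensity_nonneg σS hp.1.le) (condDensity_nonneg σN hp.1.le hp.2.le)

theorem integral_jointMeasure {σN σS : ℝ} {g : ℝ × ℝ → ℝ}
    (hg : Integrable g (jointMeasure σN σS)) :
    ∫ p, g p ∂jointMeasure σN σS = ∫ x in Ioi (0 : ℝ), rayleighDensity σS x *
      ∫ y in Ioi (0 : ℝ), condDensity σN x y * g (x, y) := by
  have hmeas := measurable_jointDensity σN σS
  have hnonneg := jointDensity_nonneg_ae σN σS
  rw [jointMeasure, integral_withDensity_ofReal hmeas hnonneg,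
    integral_prod _ ((integrable_withDensity_ofReal_iff hmeas hnonneg).1 hg)]
  simp only [jointDensity, mul_assoc, integral_const_mul]

variable {σN σS : ℝ}

theorem jointDensity_eq {x y : ℝ} (hx : 0 < x) :
    jointDensity σN σS (x, y) = 4 / (σN ^ 2 * σS ^ 2) * (y ^ 2 * exp (-(σN ^ 2)⁻¹ * y ^ 2)) *
      (exp (-((σN ^ 2)⁻¹ + (σS ^ 2)⁻¹) * x ^ 2) * besselI1 (2 * y / σN ^ 2 * x)) := by
  have hexp : exp (-x ^ 2 / σS ^ 2) * exp (-(x ^ 2 + y ^ 2) / σN ^ 2) =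
      exp (-(σN ^ 2)⁻¹ * y ^ 2) * exp (-((σN ^ 2)⁻¹ + (σS ^ 2)⁻¹) * x ^ 2) := by
    rw [← exp_add, ← exp_add]
    ring_nf
  have harg : 2 * x * y / σN ^ 2 = 2 * y / σN ^ 2 * x := by ring
  have hcoef : 2 * x / σS ^ 2 * (2 / σN ^ 2 * (y ^ 2 / x)) =
      4 / (σN ^ 2 * σS ^ 2) * y ^ 2 := by
    field_simp
    ring
  rw [jointDensity, rayleighDensity, condDensity, harg]
  linear_combination
    besselI1 (2 * y / σN ^ 2 * x) * exp (-x ^ 2 / σS ^ 2) * exp (-(x ^ 2 + y ^ 2) / σN ^ 2) *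
      hcoef +
    4 / (σN ^ 2 * σS ^ 2) * y ^ 2 * besselI1 (2 * y / σN ^ 2 * x) * hexp

theorem fst_jointMeasure (hσN : 0 < σN) (σS : ℝ) :
    (jointMeasure σN σS).fst = rayleighMeasure σS := by
  rw [jointMeasure, fst_withDensity_prod (by fun_prop), rayleighMeasure]
  refine withDensity_congr_ae (ae_Ioi_of_forall_pos fun x hx => ?_)
  simp only [jointDensity, ENNReal.ofReal_mul (rayleighDensity_nonneg σS hx.le)]
  rw [lintegral_const_mul' _ _ ENNReal.ofReal_ne_top, lintegral_condDensity hσN hx, mul_one]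

theorem isProbabilityMeasure_jointMeasure (hσN : 0 < σN) (hσS : 0 < σS) :
    IsProbabilityMeasure (jointMeasure σN σS) := by
  have := isProbabilityMeasure_rayleighMeasure hσS
  exact ⟨by rw [← Measure.fst_univ, fst_jointMeasure hσN, measure_univ]⟩

theorem lintegral_jointDensity_fst (hσN : 0 < σN) (hσS : 0 < σS) {y : ℝ} (hy : 0 < y) :
    ∫⁻ x in Ioi (0 : ℝ), ENNReal.ofReal (jointDensity σN σS (x, y)) =
      ENNReal.ofReal (2 * y / σS ^ 2 *
        (exp (-y ^ 2 / (σN ^ 2 + σS ^ 2)) - exp (-y ^ 2 / σN ^ 2))) := by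
  have hexp : exp (-y ^ 2 / (σN ^ 2 + σS ^ 2)) = exp (-(σN ^ 2)⁻¹ * y ^ 2) *
      exp ((2 * y / σN ^ 2) ^ 2 / (4 * ((σN ^ 2)⁻¹ + (σS ^ 2)⁻¹))) := by
    rw [← exp_add]
    congr 1
    field_simp
    ring
  rw [setLIntegral_congr_fun measurableSet_Ioi fun x hx => by
    rw [jointDensity_eq hx, ENNReal.ofReal_mul (by positivity)]]
  rw [lintegral_const_mul' _ _ ENNReal.ofReal_ne_top,
    lintegral_gaussian_mul_besselI1 (by positivity) (by positivity),
    ← ENNReal.ofReal_mul (by positivity), hexp,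
    show -y ^ 2 / σN ^ 2 = -(σN ^ 2)⁻¹ * y ^ 2 by ring]
  congr 1
  field_simp
  ring

/-- The output law is a difference of two multiples of Rayleigh laws; the subtracted one is moved to
the left because measures cannot be subtracted. -/
theorem snd_jointMeasure_add_smul (hσN : 0 < σN) (hσS : 0 < σS) :
    (jointMeasure σN σS).snd + ENNReal.ofReal (σN ^ 2 / σS ^ 2) • rayleighMeasure σN =
      ENNReal.ofReal (1 + σN ^ 2 / σS ^ 2) • rayleighMeasure √(σN ^ 2 + σS ^ 2) := by
  rw [jointMeasure, snd_withDensity_prod (by fun_prop), rayleighMeasure, rayleighMeasure,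
    ← withDensity_smul _ (by fun_prop), ← withDensity_smul _ (by fun_prop),
    ← withDensity_add_right _ (by fun_prop)]
  refine withDensity_congr_ae (ae_Ioi_of_forall_pos fun y hy => ?_)
  have hmono : exp (-y ^ 2 / σN ^ 2) ≤ exp (-y ^ 2 / (σN ^ 2 + σS ^ 2)) := by
    rw [exp_le_exp, neg_div, neg_div, neg_le_neg_iff]
    gcongr
    exact le_add_of_nonneg_right (sq_nonneg σS)
  have := sub_nonneg.2 hmono
  simp only [Pi.add_apply, Pi.smul_apply, smul_eq_mul, lintegral_jointDensity_fst hσN hσS hy]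
  rw [← ENNReal.ofReal_mul (by positivity), ← ENNReal.ofReal_mul (by positivity),
    ← ENNReal.ofReal_add (by positivity)
      (mul_nonneg (by positivity) (rayleighDensity_nonneg σN hy.le)),
    rayleighDensity, rayleighDensity, sq_sqrt (by positivity)]
  congr 1
  field_simp
  ring

theorem integrable_comp_fst_jointMeasure (hσN : 0 < σN) {g : ℝ → ℝ}
    (hg : Integrable g (rayleighMeasure σS)) :
    Integrable (fun p => g p.1) (jointMeasure σN σS) := by
  rw [← fst_jointMeasure hσN] at hg
  exact hg.comp_measurable measurable_fst

theorem integral_comp_fst_jointMeasure (hσN : 0 < σN) {g : ℝ → ℝ}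
    (hg : AEStronglyMeasurable g (rayleighMeasure σS)) :
    ∫ p, g p.1 ∂jointMeasure σN σS = ∫ x, g x ∂rayleighMeasure σS := by
  rw [← fst_jointMeasure hσN] at hg ⊢
  exact (integral_map measurable_fst.aemeasurable hg).symm

theorem integrable_snd_jointMeasure_and_smul (hσN : 0 < σN) (hσS : 0 < σS) {g : ℝ → ℝ}
    (hg : Integrable g (rayleighMeasure √(σN ^ 2 + σS ^ 2))) :
    Integrable g (jointMeasure σN σS).snd ∧
      Integrable g (ENNReal.ofReal (σN ^ 2 / σS ^ 2) • rayleighMeasure σN) := by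
  rw [← integrable_add_measure, snd_jointMeasure_add_smul hσN hσS]
  exact hg.smul_measure ENNReal.ofReal_ne_top

theorem integrable_comp_snd_jointMeasure (hσN : 0 < σN) (hσS : 0 < σS) {g : ℝ → ℝ}
    (hg : Integrable g (rayleighMeasure √(σN ^ 2 + σS ^ 2))) :
    Integrable (fun p => g p.2) (jointMeasure σN σS) :=
  (integrable_snd_jointMeasure_and_smul hσN hσS hg).1.comp_measurable measurable_snd

theorem integral_comp_snd_jointMeasure (hσN : 0 < σN) (hσS : 0 < σS) {g : ℝ → ℝ}
    (hg : Integrable g (rayleighMeasure √(σN ^ 2 + σS ^ 2))) :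
    ∫ p, g p.2 ∂jointMeasure σN σS =
      (1 + σN ^ 2 / σS ^ 2) * ∫ y, g y ∂rayleighMeasure √(σN ^ 2 + σS ^ 2) -
        σN ^ 2 / σS ^ 2 * ∫ y, g y ∂rayleighMeasure σN := by
  obtain ⟨hsnd, hnoise⟩ := integrable_snd_jointMeasure_and_smul hσN hσS hg
  have h := integral_add_measure hsnd hnoise
  rw [snd_jointMeasure_add_smul hσN hσS, integral_smul_measure, integral_smul_measure,
    ENNReal.toReal_ofReal (by positivity), ENNReal.toReal_ofReal (by positivity),
    Measure.snd, integral_map measurable_snd.aemeasurable hsnd.aestronglyMeasurable] at h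
  simp only [smul_eq_mul] at h
  linarith

theorem integrable_sq_fst_jointMeasure (hσN : 0 < σN) (hσS : 0 < σS) :
    Integrable (fun p => p.1 ^ 2) (jointMeasure σN σS) :=
  integrable_comp_fst_jointMeasure hσN (integrable_sq_rayleighMeasure hσS)

theorem integral_sq_fst_jointMeasure (hσN : 0 < σN) (hσS : 0 < σS) :
    ∫ p, p.1 ^ 2 ∂jointMeasure σN σS = σS ^ 2 := by
  rw [integral_comp_fst_jointMeasure hσN (g := fun x => x ^ 2) (by fun_prop),
    integral_sq_rayleighMeasure hσS]

theorem integrable_log_fst_jointMeasure (hσN : 0 < σN) (hσS : 0 < σS) :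
    Integrable (fun p => log p.1) (jointMeasure σN σS) :=
  integrable_comp_fst_jointMeasure hσN (integrable_log_rayleighMeasure hσS)

theorem integral_log_fst_jointMeasure (hσN : 0 < σN) (hσS : 0 < σS) :
    ∫ p, log p.1 ∂jointMeasure σN σS = log σS + digamma 1 / 2 := by
  rw [integral_comp_fst_jointMeasure hσN measurable_log.aestronglyMeasurable,
    integral_log_rayleighMeasure hσS]

theorem integrable_sq_snd_jointMeasure (hσN : 0 < σN) (hσS : 0 < σS) :
    Integrable (fun p => p.2 ^ 2) (jointMeasure σN σS) :=
  integrable_comp_snd_jointMeasure hσN hσS (integrable_sq_rayleighMeasure (by positivity))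

theorem integrable_log_snd_jointMeasure (hσN : 0 < σN) (hσS : 0 < σS) :
    Integrable (fun p => log p.2) (jointMeasure σN σS) :=
  integrable_comp_snd_jointMeasure hσN hσS (integrable_log_rayleighMeasure (by positivity))

theorem integral_sq_snd_jointMeasure (hσN : 0 < σN) (hσS : 0 < σS) :
    ∫ p, p.2 ^ 2 ∂jointMeasure σN σS = 2 * σN ^ 2 + σS ^ 2 := by
  have hσ : 0 < √(σN ^ 2 + σS ^ 2) := by positivity
  rw [integral_comp_snd_jointMeasure hσN hσS (integrable_sq_rayleighMeasure hσ),
    integral_sq_rayleighMeasure hσ, integral_sq_rayleighMeasure hσN, sq_sqrt (by positivity)]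
  field_simp
  ring

theorem integral_log_snd_jointMeasure (hσN : 0 < σN) (hσS : 0 < σS) :
    ∫ p, log p.2 ∂jointMeasure σN σS = (1 + σN ^ 2 / σS ^ 2) * (log (σN ^ 2 + σS ^ 2) / 2) -
      σN ^ 2 / σS ^ 2 * log σN + digamma 1 / 2 := by
  have hσ : 0 < √(σN ^ 2 + σS ^ 2) := by positivity
  rw [integral_comp_snd_jointMeasure hσN hσS (integrable_log_rayleighMeasure hσ),
    integral_log_rayleighMeasure hσ, integral_log_rayleighMeasure hσN, log_sqrt (by positivity)]
  ring

theorem integrable_log_besselI1_jointMeasure (hσN : 0 < σN) (hσS : 0 < σS) :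
    Integrable (fun p => log (besselI1 (2 * p.1 * p.2 / σN ^ 2))) (jointMeasure σN σS) := by
  have := isProbabilityMeasure_jointMeasure hσN hσS
  have hlog_fst := integrable_log_fst_jointMeasure hσN hσS
  have hlog_snd := integrable_log_snd_jointMeasure hσN hσS
  have hsq_fst := integrable_sq_fst_jointMeasure hσN hσS
  have hsq_snd := integrable_sq_snd_jointMeasure hσN hσS
  refine (((hlog_fst.abs.add hlog_snd.abs).add (integrable_const |log (σN ^ 2)|)).add
    ((hsq_fst.add hsq_snd).div_const (σN ^ 2))).mono'
      (Measurable.aestronglyMeasurable (by fun_prop)) ?_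
  filter_upwards [ae_jointMeasure_pos σN σS] with p ⟨hx, hy⟩
  have hlog : log (2 * p.1 * p.2 / σN ^ 2 / 2) = log p.1 + log p.2 - log (σN ^ 2) := by
    rw [← log_mul hx.ne' hy.ne', ← log_div (by positivity) (by positivity)]
    ring_nf
  calc |log (besselI1 (2 * p.1 * p.2 / σN ^ 2))|
      ≤ |log p.1 + log p.2 - log (σN ^ 2)| + 2 * p.1 * p.2 / σN ^ 2 :=
        hlog ▸ abs_log_besselI1_le (by positivity)
    _ ≤ |log p.1| + |log p.2| + |log (σN ^ 2)| + (p.1 ^ 2 + p.2 ^ 2) / σN ^ 2 := by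
        gcongr
        · exact (abs_sub _ _).trans (by gcongr; exact abs_add_le _ _)
        · exact two_mul_le_add_sq _ _

/-- The factor `σN² / (2y)` is the Jacobian of the change of variables `ξ = 2xy / σN²`. -/
theorem mul_jointDensity_hyperbola (hσN : 0 < σN) (hσS : 0 < σS) {ξ y : ℝ} (hξ : 0 < ξ)
    (hy : 0 < y) :
    σN ^ 2 / (2 * y) * jointDensity σN σS (σN ^ 2 / (2 * y) * ξ, y) = besselI1 ξ / σS ^ 2 *
      (2 * y * exp (-(((σN ^ 2)⁻¹ + (σS ^ 2)⁻¹) * (σN ^ 2 * ξ / 2) ^ 2) / y ^ 2 -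
        (σN ^ 2)⁻¹ * y ^ 2)) := by
  have hexp : exp (-(((σN ^ 2)⁻¹ + (σS ^ 2)⁻¹) * (σN ^ 2 * ξ / 2) ^ 2) / y ^ 2 -
      (σN ^ 2)⁻¹ * y ^ 2) = exp (-(σN ^ 2)⁻¹ * y ^ 2) *
        exp (-((σN ^ 2)⁻¹ + (σS ^ 2)⁻¹) * (σN ^ 2 / (2 * y) * ξ) ^ 2) := by
    rw [← exp_add]
    ring_nf
  have harg : 2 * y / σN ^ 2 * (σN ^ 2 / (2 * y) * ξ) = ξ := by field_simp
  rw [jointDensity_eq (by positivity), harg, hexp]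
  field_simp
  ring

theorem lintegral_mul_jointDensity_hyperbola (hσN : 0 < σN) (hσS : 0 < σS) {ξ : ℝ}
    (hξ : 0 < ξ) :
    ∫⁻ y in Ioi (0 : ℝ),
        ENNReal.ofReal (σN ^ 2 / (2 * y) * jointDensity σN σS (σN ^ 2 / (2 * y) * ξ, y)) =
      ENNReal.ofReal (σN ^ 2 / σS ^ 2 * √(1 + σN ^ 2 / σS ^ 2) *
        (ξ * besselK1 (√(1 + σN ^ 2 / σS ^ 2) * ξ) * besselI1 ξ)) := by
  set β := ((σN ^ 2)⁻¹ + (σS ^ 2)⁻¹) * (σN ^ 2 * ξ / 2) ^ 2 with hβ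
  have hβ_pos : 0 < β := by positivity
  have hI := besselI1_nonneg hξ.le
  have hsqrt_div : √(β / (σN ^ 2)⁻¹) = σN ^ 2 * ξ / 2 * √(1 + σN ^ 2 / σS ^ 2) := by
    rw [show β / (σN ^ 2)⁻¹ = (σN ^ 2 * ξ / 2) ^ 2 * (1 + σN ^ 2 / σS ^ 2) by
      rw [hβ]; field_simp, sqrt_mul (by positivity), sqrt_sq (by positivity)]
  have hsqrt_mul : 2 * √(β * (σN ^ 2)⁻¹) = √(1 + σN ^ 2 / σS ^ 2) * ξ := by
    rw [show β * (σN ^ 2)⁻¹ = (ξ / 2) ^ 2 * (1 + σN ^ 2 / σS ^ 2) by rw [hβ]; field_simp,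
      sqrt_mul (by positivity), sqrt_sq (by positivity)]
    ring
  rw [setLIntegral_congr_fun measurableSet_Ioi fun y hy => by
    rw [mul_jointDensity_hyperbola hσN hσS hξ hy, ← hβ, ENNReal.ofReal_mul (by positivity)]]
  rw [lintegral_const_mul' _ _ ENNReal.ofReal_ne_top,
    lintegral_two_mul_exp_neg_div_sq_sub_mul_sq hβ_pos (by positivity), hsqrt_div, hsqrt_mul,
    ← ENNReal.ofReal_mul (by positivity)]
  congr 1
  field_simp

theorem map_two_mul_mul_div_jointMeasure (hσN : 0 < σN) (hσS : 0 < σS) :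
    (jointMeasure σN σS).map (fun p => 2 * p.1 * p.2 / σN ^ 2) =
      (volume.restrict (Ioi 0)).withDensity fun ξ =>
        ENNReal.ofReal (σN ^ 2 / σS ^ 2 * √(1 + σN ^ 2 / σS ^ 2) *
          (ξ * besselK1 (√(1 + σN ^ 2 / σS ^ 2) * ξ) * besselI1 ξ)) := by
  refine Measure.ext_of_lintegral _ fun f hf => ?_
  rw [lintegral_map hf (by fun_prop), jointMeasure,
    lintegral_withDensity_eq_lintegral_mul _ (by fun_prop) (by fun_prop),
    lintegral_prod_symm _ (by fun_prop),
    lintegral_withDensity_eq_lintegral_mul _ (by fun_prop) hf]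
  simp only [Pi.mul_apply]
  calc ∫⁻ y in Ioi (0 : ℝ), ∫⁻ x in Ioi (0 : ℝ),
        ENNReal.ofReal (jointDensity σN σS (x, y)) * f (2 * x * y / σN ^ 2)
      = ∫⁻ y in Ioi (0 : ℝ), ∫⁻ ξ in Ioi (0 : ℝ),
          ENNReal.ofReal (σN ^ 2 / (2 * y) * jointDensity σN σS (σN ^ 2 / (2 * y) * ξ, y)) *
            f ξ := by
        refine setLIntegral_congr_fun measurableSet_Ioi fun y (hy : 0 < y) => ?_
        have hc : 0 < σN ^ 2 / (2 * y) := by positivity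
        have hscale (ξ : ℝ) : 2 * (σN ^ 2 / (2 * y) * ξ) * y / σN ^ 2 = ξ := by field_simp
        rw [← lintegral_comp_mul_left_Ioi _ hc, ← lintegral_const_mul' _ _ ENNReal.ofReal_ne_top]
        simp only [hscale, ← mul_assoc (ENNReal.ofReal _), ENNReal.ofReal_mul hc.le]
    _ = ∫⁻ ξ in Ioi (0 : ℝ), (∫⁻ y in Ioi (0 : ℝ),
          ENNReal.ofReal (σN ^ 2 / (2 * y) * jointDensity σN σS (σN ^ 2 / (2 * y) * ξ, y))) *
            f ξ := by
        rw [lintegral_lintegral_swap (by fun_prop)]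
        refine lintegral_congr fun ξ => ?_
        rw [lintegral_mul_const _ (by fun_prop)]
    _ = _ := by
        refine setLIntegral_congr_fun measurableSet_Ioi fun ξ hξ => ?_
        rw [lintegral_mul_jointDensity_hyperbola hσN hσS hξ]

theorem integral_log_besselI1_jointMeasure (hσN : 0 < σN) (hσS : 0 < σS) :
    ∫ p, log (besselI1 (2 * p.1 * p.2 / σN ^ 2)) ∂jointMeasure σN σS =
      σN ^ 2 / σS ^ 2 * √(1 + σN ^ 2 / σS ^ 2) * Fint (σS ^ 2 / σN ^ 2) := by
  rw [← integral_map (φ := fun p : ℝ × ℝ => 2 * p.1 * p.2 / σN ^ 2)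
    (f := fun ξ => log (besselI1 ξ)) (by fun_prop)
    (Measurable.aestronglyMeasurable (by fun_prop)), map_two_mul_mul_div_jointMeasure hσN hσS,
    integral_withDensity_ofReal (by fun_prop), Fint, inv_div, ← integral_const_mul]
  · simp only [mul_assoc]
  · refine ae_Ioi_of_forall_pos fun ξ hξ => ?_
    have hI := besselI1_nonneg hξ.le
    have hK := besselK1_nonneg (√(1 + σN ^ 2 / σS ^ 2) * ξ)
    simp only [Pi.zero_apply]
    positivity

theorem log_condDensity_ae_eq (hσN : 0 < σN) (σS : ℝ) :
    (fun p => log (condDensity σN p.1 p.2)) =ᵐ[jointMeasure σN σS] fun p =>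
      log 2 - log (σN ^ 2) + 2 * log p.2 - log p.1 - (p.1 ^ 2 + p.2 ^ 2) / σN ^ 2 +
        log (besselI1 (2 * p.1 * p.2 / σN ^ 2)) :=
  (ae_jointMeasure_pos σN σS).mono fun _ hp => log_condDensity hσN hp.1 hp.2

theorem integrable_log_condDensity (hσN : 0 < σN) (hσS : 0 < σS) :
    Integrable (fun p => log (condDensity σN p.1 p.2)) (jointMeasure σN σS) := by
  have := isProbabilityMeasure_jointMeasure hσN hσS
  refine (integrable_congr (log_condDensity_ae_eq hσN σS)).2 (Integrable.add (((Integrable.add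
    (integrable_const _) ((integrable_log_snd_jointMeasure hσN hσS).const_mul 2)).sub
    (integrable_log_fst_jointMeasure hσN hσS)).sub
    (((integrable_sq_fst_jointMeasure hσN hσS).add
      (integrable_sq_snd_jointMeasure hσN hσS)).div_const _))
    (integrable_log_besselI1_jointMeasure hσN hσS))

theorem integral_log_condDensity (hσN : 0 < σN) (hσS : 0 < σS) :
    ∫ p, log (condDensity σN p.1 p.2) ∂jointMeasure σN σS =
      log 2 - log (σN ^ 2) + 2 * (∫ p, log p.2 ∂jointMeasure σN σS) -
        (∫ p, log p.1 ∂jointMeasure σN σS) -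
        ((∫ p, p.1 ^ 2 ∂jointMeasure σN σS) + ∫ p, p.2 ^ 2 ∂jointMeasure σN σS) / σN ^ 2 +
        ∫ p, log (besselI1 (2 * p.1 * p.2 / σN ^ 2)) ∂jointMeasure σN σS := by
  have := isProbabilityMeasure_jointMeasure hσN hσS
  have hlog_fst := integrable_log_fst_jointMeasure hσN hσS
  have hlog_snd := integrable_log_snd_jointMeasure hσN hσS
  have hsq_fst := integrable_sq_fst_jointMeasure hσN hσS
  have hsq_snd := integrable_sq_snd_jointMeasure hσN hσS
  have hbessel := integrable_log_besselI1_jointMeasure hσN hσS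
  rw [integral_congr_ae (log_condDensity_ae_eq hσN σS), integral_add, integral_sub, integral_sub,
    integral_add, integral_const, integral_const_mul, integral_div, integral_add hsq_fst hsq_snd,
    probReal_univ, one_smul]
  all_goals fun_prop

end JointLaw

/-- Lemma 2: closed form for the conditional differential entropy
h_{Y|X} = −∫₀^∞ p_X(x) (∫₀^∞ p_{Y|X}(y|x) log p_{Y|X}(y|x) dy) dx. -/
theorem stmt_4 (σN σS ρ : ℝ) (hσN : 0 < σN) (hσS : 0 < σS) (hρ : ρ = σS ^ 2 / σN ^ 2) :
    -∫ x in Ioi (0 : ℝ), rayleighDensity σS x *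
        ∫ y in Ioi (0 : ℝ), condDensity σN x y * Real.log (condDensity σN x y) =
      Real.log (Real.sqrt (σS ^ 2)) + 2 * (1 + ρ) - (1 + ρ⁻¹) * Real.log (1 + ρ) -
        ρ⁻¹ * Real.sqrt (1 + ρ⁻¹) * Fint ρ - digamma 1 / 2 - Real.log 2 := by
  subst hρ
  have hlog_one_add : log (1 + σS ^ 2 / σN ^ 2) = log (σN ^ 2 + σS ^ 2) - log (σN ^ 2) := by
    rw [one_add_div (by positivity), log_div (by positivity) (by positivity)]
  rw [← integral_jointMeasure (integrable_log_condDensity hσN hσS),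
    integral_log_condDensity hσN hσS, integral_log_snd_jointMeasure hσN hσS,
    integral_log_fst_jointMeasure hσN hσS, integral_sq_fst_jointMeasure hσN hσS,
    integral_sq_snd_jointMeasure hσN hσS, integral_log_besselI1_jointMeasure hσN hσS,
    sqrt_sq hσS.le, hlog_one_add, inv_div, log_pow σN, Nat.cast_ofNat]
  field_simp
  ring
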